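/- For every δ∈(0,1) and every ν∈𝒫(V), I_δ(ν)=I₁(ν). -/

import Mathlib

open scoped BigOperators Classical ENNReal
open Filter Topology

noncomputable section
namespace ORRW

/-- Probability measures on a finite type `A`, topologized as a subset of `ℝ^A`. -/
abbrev ProbMeas (A : Type) [Fintype A] : Type :=
  {p : A → ℝ // (∀ a, 0 ≤ p a) ∧ ∑ a, p a = 1}

/-- Relative entropy `R(γ‖ρ)` between two finitely supported "rows", valued in `EReal`,
with `+∞` when absolute continuity fails. -/
def relEnt {A : Type} [Fintype A] (γ ρ : A → ℝ) : EReal :=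
  if ∀ a, ρ a = 0 → γ a = 0 then ((∑ a, γ a * Real.log (γ a / ρ a) : ℝ) : EReal)
  else (⊤ : EReal)

/-- `∫ R(q‖p) dν = Σ_a ν(a) · R(q(a,·)‖p(a,·))`. -/
def relEntInt {A : Type} [Fintype A] (ν : A → ℝ) (q p : A → A → ℝ) : EReal :=
  ∑ a, (ν a : EReal) * relEnt (q a) (p a)

/-- `ν` is an invariant measure of the kernel `q`. -/
def Invariant {A : Type} [Fintype A] (ν : A → ℝ) (q : A → A → ℝ) : Prop :=
  ∀ y, ∑ x, ν x * q x y = ν y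

/-- Extended-real logarithm: `⊥` at nonpositive arguments. -/
def elog (x : ℝ) : EReal := if x ≤ 0 then (⊥ : EReal) else ((Real.log x : ℝ) : EReal)

/-- Empirical measure of a finite trajectory `f : Fin (n+1) → A`. -/
def empMeas {A : Type} [Fintype A] [DecidableEq A] (n : ℕ) (f : Fin (n + 1) → A) :
    ProbMeas A :=
  ⟨fun a => ((Finset.univ.filter (fun i => f i = a)).card : ℝ) / (n + 1),
    fun a => by positivity, by
      have key : ∑ a : A, ((Finset.univ.filter (fun i => f i = a)).card) = n + 1 := by
        have h := Finset.card_eq_sum_card_fiberwise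
          (s := (Finset.univ : Finset (Fin (n + 1)))) (t := (Finset.univ : Finset A))
          (f := f) (fun i _ => Finset.mem_univ (f i))
        simpa using h.symm
      have key' : ∑ a : A, (((Finset.univ.filter (fun i => f i = a)).card : ℝ)) = (n : ℝ) + 1 := by
        have h2 := congrArg (fun m : ℕ => (m : ℝ)) key
        push_cast at h2
        simpa using h2
      rw [← Finset.sum_div, key', div_self (by positivity)]⟩

section Graph

variable {V : Type} [Fintype V] [DecidableEq V]

/-- Weight of an edge given the set `F` of already traversed edges. -/
def gw (δ : ℝ) (F : Finset (Sym2 V)) (e : Sym2 V) : ℝ := if e ∈ F then δ else 1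

/-- The transition kernel `p̂_F` on `V`. -/
def phat (G : SimpleGraph V) [DecidableRel G.Adj] (δ : ℝ) (F : Finset (Sym2 V))
    (x y : V) : ℝ :=
  if G.Adj x y then gw δ F s(x, y) / ∑ z ∈ G.neighborFinset x, gw δ F s(x, z) else 0

/-- Two edges are adjacent iff they share a vertex. -/
def edgeAdj (e e' : Sym2 V) : Prop := ∃ v, v ∈ e ∧ v ∈ e'

/-- `x` is a vertex of the edge set `F`. -/
def memVerts (F : Finset (Sym2 V)) (x : V) : Prop := ∃ e ∈ F, x ∈ e

/-- `𝒯_G`: stochastic matrices on `V` adapted to `G`. -/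
def TG (G : SimpleGraph V) : Set (V → V → ℝ) :=
  {q | (∀ x y, 0 ≤ q x y) ∧ (∀ x, ∑ y, q x y = 1) ∧ ∀ x y, q x y ≠ 0 → G.Adj x y}

/-- `𝒯(F)`: stochastic kernels from the vertex set of `F` to `V`, supported on `F`. -/
def TE (F : Finset (Sym2 V)) : Set (V → V → ℝ) :=
  {q | (∀ x y, 0 ≤ q x y) ∧ (∀ x, memVerts F x → ∑ y, q x y = 1) ∧
    ∀ x y, q x y ≠ 0 → s(x, y) ∈ F}

/-- `ℰ`: admissible increasing sequences of traversed edge sets. -/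
def seqE (G : SimpleGraph V) [DecidableRel G.Adj] (v₁ : V) :
    Set (Fin G.edgeFinset.card → Finset (Sym2 V)) :=
  {Es | (∀ k, Es k ⊆ G.edgeFinset) ∧ (∀ k, (Es k).card = (k : ℕ) + 1) ∧
    (∀ k l : Fin G.edgeFinset.card, (k : ℕ) + 1 = (l : ℕ) → Es k ⊂ Es l) ∧
    (∀ k : Fin G.edgeFinset.card, (k : ℕ) = 0 → ∃ e ∈ Es k, v₁ ∈ e) ∧
    (∀ k l : Fin G.edgeFinset.card, (k : ℕ) + 1 = (l : ℕ) →
      ∀ e ∈ Es l \ Es k, ∃ e' ∈ Es k, edgeAdj e e')}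

/-- The rate function `I_δ`. -/
def Ifun (G : SimpleGraph V) [DecidableRel G.Adj] (v₁ : V) (δ : ℝ) (ν : ProbMeas V) : EReal :=
  sInf { c : EReal |
    ∃ (νs : Fin G.edgeFinset.card → ProbMeas V) (r : Fin G.edgeFinset.card → ℝ)
      (Es : Fin G.edgeFinset.card → Finset (Sym2 V))
      (qs : Fin G.edgeFinset.card → V → V → ℝ),
      Es ∈ seqE G v₁ ∧ (∀ k, 0 ≤ r k) ∧ (∑ k, r k = 1) ∧
      (∀ k x, (νs k).1 x ≠ 0 → memVerts (Es k) x) ∧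
      (∀ x, ∑ k, r k * (νs k).1 x = ν.1 x) ∧
      (∀ k, qs k ∈ TE (Es k)) ∧ (∀ k, Invariant (νs k).1 (qs k)) ∧
      c = ∑ k, ((r k : ℝ) : EReal) * relEntInt (νs k).1 (qs k) (phat G δ (Es k)) }

/-- Edges traversed along a path, given as a list of consecutively visited vertices. -/
def pathEdges : List V → Finset (Sym2 V)
  | [] => ∅
  | [_] => ∅
  | x :: y :: t => insert s(x, y) (pathEdges (y :: t))

/-- Product of one-step ORRW transition probabilities along a trajectory,
the trajectory being listed in reverse chronological order. -/
def stepsProb (G : SimpleGraph V) [DecidableRel G.Adj] (δ : ℝ) : List V → ℝ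
  | [] => 1
  | [_] => 1
  | y :: x :: t => phat G δ (pathEdges (x :: t).reverse) x y * stepsProb G δ (x :: t)

/-- The law of `(X_0, …, X_n)` for the `δ`-ORRW started at `v₁`. -/
def trajProb (G : SimpleGraph V) [DecidableRel G.Adj] (δ : ℝ) (v₁ : V) (n : ℕ)
    (f : Fin (n + 1) → V) : ℝ :=
  if f 0 = v₁ then stepsProb G δ (List.ofFn f).reverse else 0

/-- `P_{v₁}(L_{n+1} ∈ C)`: the probability that the empirical measure of the first
`n+1` positions of the `δ`-ORRW lies in `C`. -/
def probEmp (G : SimpleGraph V) [DecidableRel G.Adj] (δ : ℝ) (v₁ : V) (n : ℕ)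
    (C : Set (ProbMeas V)) : ℝ :=
  ∑ f : Fin (n + 1) → V, if empMeas n f ∈ C then trajProb G δ v₁ n f else 0

/-- The family `𝒮` of edge sets of connected subgraphs having an edge at `v₁`. -/
def scrS (G : SimpleGraph V) [DecidableRel G.Adj] (v₁ : V) : Set (Finset (Sym2 V)) :=
  {F | F ⊆ G.edgeFinset ∧ (∃ e ∈ F, v₁ ∈ e) ∧
    ∀ x y : V, memVerts F x → memVerts F y →
      (SimpleGraph.fromEdgeSet (↑F : Set (Sym2 V))).Reachable x y}

/-- `𝒮₀` is a decreasing subset of `𝒮`. -/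
def DecreasingIn (G : SimpleGraph V) [DecidableRel G.Adj] (v₁ : V)
    (S0 : Set (Finset (Sym2 V))) : Prop :=
  ∀ F₁ F₂, F₁ ∈ scrS G v₁ → F₂ ∈ scrS G v₁ → F₁ ⊆ F₂ → F₂ ∈ S0 → F₁ ∈ S0

/-- `P_{v₁}(T_{𝒮₀} > n)`. -/
def probTgt (G : SimpleGraph V) [DecidableRel G.Adj] (δ : ℝ) (v₁ : V)
    (S0 : Set (Finset (Sym2 V))) (n : ℕ) : ℝ :=
  ∑ f : Fin (n + 1) → V,
    if ∀ k, 1 ≤ k → k ≤ n → pathEdges ((List.ofFn f).take (k + 1)) ∈ S0 then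
      trajProb G δ v₁ n f
    else 0

/-- `P_{v₁}(C_E > n)` for the edge cover time `C_E`. -/
def probCgt (G : SimpleGraph V) [DecidableRel G.Adj] (δ : ℝ) (v₁ : V) (n : ℕ) : ℝ :=
  ∑ f : Fin (n + 1) → V,
    if ¬ G.edgeFinset ⊆ pathEdges (List.ofFn f) then trajProb G δ v₁ n f else 0

/-- `E_{v₁}[exp (α T_{𝒮₀})]`, valued in `ℝ≥0∞`; the stopping time takes values in
`{1, 2, …} ∪ {∞}`. -/
def expT (G : SimpleGraph V) [DecidableRel G.Adj] (δ : ℝ) (v₁ : V)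
    (S0 : Set (Finset (Sym2 V))) (α : ℝ) : ℝ≥0∞ :=
  (∑' n : ℕ, ENNReal.ofReal
      (Real.exp (α * (n + 1)) * (probTgt G δ v₁ S0 n - probTgt G δ v₁ S0 (n + 1)))) +
    (if 0 < α then (⊤ : ℝ≥0∞) else if α = 0 then 1 else 0) *
      ENNReal.ofReal (⨅ n : ℕ, probTgt G δ v₁ S0 n)

/-- `E_{v₁}[exp (α C_E)]`, valued in `ℝ≥0∞`. -/
def expC (G : SimpleGraph V) [DecidableRel G.Adj] (δ : ℝ) (v₁ : V) (α : ℝ) : ℝ≥0∞ :=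
  (∑' n : ℕ, ENNReal.ofReal
      (Real.exp (α * (n + 1)) * (probCgt G δ v₁ n - probCgt G δ v₁ (n + 1)))) +
    (if 0 < α then (⊤ : ℝ≥0∞) else if α = 0 then 1 else 0) *
      ENNReal.ofReal (⨅ n : ℕ, probCgt G δ v₁ n)

/-- The critical exponent `α_c(δ)` attached to a family `𝒮₀` of edge sets. -/
def alphaC (G : SimpleGraph V) [DecidableRel G.Adj] (δ : ℝ)
    (S0 : Set (Finset (Sym2 V))) : EReal :=
  sInf { c : EReal | ∃ (ν : ProbMeas V) (F : Finset (Sym2 V)) (q : V → V → ℝ),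
    F ∈ S0 ∧ q ∈ TE F ∧ (∀ x, ν.1 x ≠ 0 → memVerts F x) ∧ Invariant ν.1 q ∧
    c = relEntInt ν.1 q (phat G δ F) }

/-- `α_c^1(δ)`: the critical exponent for the cover time. -/
def alphaC1 (G : SimpleGraph V) [DecidableRel G.Adj] (v₁ : V) (δ : ℝ) : EReal :=
  alphaC G δ (scrS G v₁ \ {G.edgeFinset})

end Graph

section Lifted

variable {V : Type} [Fintype V] [LinearOrder V]

/-- Smaller endpoint of an unordered pair. -/
def sym2lo (e : Sym2 V) : V := Sym2.lift ⟨fun a b => min a b, fun a b => min_comm a b⟩ e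

/-- Larger endpoint of an unordered pair. -/
def sym2hi (e : Sym2 V) : V := Sym2.lift ⟨fun a b => max a b, fun a b => max_comm a b⟩ e

/-- `V_S = E × {-1, 1}`: vertex set of the lifted directed graph `S`
(`true` plays the role of `+1`). -/
abbrev VSet (G : SimpleGraph V) [DecidableRel G.Adj] : Type :=
  {e : Sym2 V // e ∈ G.edgeFinset} × Bool

/-- Tail `z⁻` of an oriented edge. -/
def zm (G : SimpleGraph V) [DecidableRel G.Adj] (z : VSet G) : V :=
  if z.2 then sym2lo z.1.1 else sym2hi z.1.1

/-- Head `z⁺` of an oriented edge. -/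
def zp (G : SimpleGraph V) [DecidableRel G.Adj] (z : VSet G) : V :=
  if z.2 then sym2hi z.1.1 else sym2lo z.1.1

/-- The kernel `p_F` on the lifted directed graph `S`. -/
def pS (G : SimpleGraph V) [DecidableRel G.Adj] (δ : ℝ) (F : Finset (Sym2 V))
    (z₁ z₂ : VSet G) : ℝ :=
  if zp G z₁ = zm G z₂ then
    gw δ F z₂.1.1 / ∑ w : VSet G, (if zp G z₁ = zm G w then gw δ F w.1.1 else 0)
  else 0

/-- `𝒯_S`: stochastic matrices on `V_S` moving along orientations. -/
def TS (G : SimpleGraph V) [DecidableRel G.Adj] : Set (VSet G → VSet G → ℝ) :=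
  {q | (∀ z w, 0 ≤ q z w) ∧ (∀ z, ∑ w, q z w = 1) ∧ ∀ z w, q z w ≠ 0 → zp G z = zm G w}

/-- `𝒞(𝒮₀)`: probability measures on `V_S` whose first marginal is supported in
some member of `𝒮₀`. -/
def CC (G : SimpleGraph V) [DecidableRel G.Adj] (S0 : Set (Finset (Sym2 V))) :
    Set (ProbMeas (VSet G)) :=
  {μ | ∃ F ∈ S0, ∀ z : VSet G, μ.1 z ≠ 0 → z.1.1 ∈ F}

/-- `Λ_{δ,𝒮₀}`. -/
def Lam (G : SimpleGraph V) [DecidableRel G.Adj] (v₁ : V) (δ : ℝ)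
    (S0 : Set (Finset (Sym2 V))) (μ : ProbMeas (VSet G)) : EReal :=
  sInf { c : EReal |
    ∃ (μs : Fin G.edgeFinset.card → ProbMeas (VSet G)) (r : Fin G.edgeFinset.card → ℝ)
      (Es : Fin G.edgeFinset.card → Finset (Sym2 V))
      (qs : Fin G.edgeFinset.card → VSet G → VSet G → ℝ),
      Es ∈ seqE G v₁ ∧ (∀ k, 0 ≤ r k) ∧ (∀ k, Es k ∉ S0 → r k = 0) ∧ (∑ k, r k = 1) ∧
      (∀ k z, (μs k).1 z ≠ 0 → z.1.1 ∈ Es k) ∧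
      (∀ z, ∑ k, r k * (μs k).1 z = μ.1 z) ∧
      (∀ k, qs k ∈ TS G) ∧ (∀ k, Invariant (μs k).1 (qs k)) ∧
      c = ∑ k, ((r k : ℝ) : EReal) * relEntInt (μs k).1 (qs k) (pS G δ (Es k)) }

/-- `Λ^z_{δ,𝒮₀}`. -/
def LamZ (G : SimpleGraph V) [DecidableRel G.Adj] (v₁ : V) (δ : ℝ)
    (S0 : Set (Finset (Sym2 V))) (z : VSet G) (μ : ProbMeas (VSet G)) : EReal :=
  sInf { c : EReal |
    ∃ (μs : Fin G.edgeFinset.card → ProbMeas (VSet G)) (r : Fin G.edgeFinset.card → ℝ)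
      (Es : Fin G.edgeFinset.card → Finset (Sym2 V))
      (qs : Fin G.edgeFinset.card → VSet G → VSet G → ℝ),
      Es ∈ seqE G v₁ ∧ (∀ k : Fin G.edgeFinset.card, (k : ℕ) = 0 → Es k = {z.1.1}) ∧
      (∀ k, 0 ≤ r k) ∧ (∀ k, Es k ∉ S0 → r k = 0) ∧ (∑ k, r k = 1) ∧
      (∀ k w, (μs k).1 w ≠ 0 → w.1.1 ∈ Es k) ∧
      (∀ w, ∑ k, r k * (μs k).1 w = μ.1 w) ∧
      (∀ k, qs k ∈ TS G) ∧ (∀ k, Invariant (μs k).1 (qs k)) ∧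
      c = ∑ k, ((r k : ℝ) : EReal) * relEntInt (μs k).1 (qs k) (pS G δ (Es k)) }

/-- `Λ₁`: the Donsker–Varadhan functional for the simple random walk on `S`
(whose kernel is `pS` with `δ = 1`). -/
def Lam1 (G : SimpleGraph V) [DecidableRel G.Adj] (μ : ProbMeas (VSet G)) : EReal :=
  sInf { c : EReal | ∃ q ∈ TS G, Invariant μ.1 q ∧ c = relEntInt μ.1 q (pS G 1 ∅) }

/-- Boundary `∂F` of an edge set: edges of `F` adjacent to some edge outside `F`. -/
def bdry (G : SimpleGraph V) [DecidableRel G.Adj] (F : Finset (Sym2 V)) : Finset (Sym2 V) :=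
  F.filter fun e => ∃ e' ∈ G.edgeFinset \ F, edgeAdj e e'

/-- Out-degree `d(z)` of `z` in `S`. -/
def outDeg (G : SimpleGraph V) [DecidableRel G.Adj] (z : VSet G) : ℕ :=
  (Finset.univ.filter (fun w : VSet G => zp G z = zm G w)).card

/-- Number `k(z)` of out-neighbours of `z` lying in `F × {-1, 1}`. -/
def outDegIn (G : SimpleGraph V) [DecidableRel G.Adj] (F : Finset (Sym2 V))
    (z : VSet G) : ℕ :=
  (Finset.univ.filter (fun w : VSet G => zp G z = zm G w ∧ w.1.1 ∈ F)).card

/-- The law of `(Z_0, …, Z_n)` for the lifted `δ`-ORRW conditioned on `Z_0 = z`. -/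
def liftTraj (G : SimpleGraph V) [DecidableRel G.Adj] (δ : ℝ) (z : VSet G) (n : ℕ)
    (g : Fin (n + 1) → VSet G) : ℝ :=
  if g 0 = z then
    ∏ i : Fin n,
      pS G δ ((Finset.Iic i.castSucc).image (fun j => (g j).1.1))
        (g i.castSucc) (g i.succ)
  else 0

/-- The restricted logarithmic Laplace functional `W^{n+1}_{𝒮₀}(z)`. -/
def Wres (G : SimpleGraph V) [DecidableRel G.Adj] (δ : ℝ) (z : VSet G)
    (S0 : Set (Finset (Sym2 V))) (h : ProbMeas (VSet G) → ℝ) (n : ℕ) : EReal :=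
  if 0 < ∑ g : Fin (n + 1) → VSet G,
      (if empMeas n g ∈ CC G S0 then liftTraj G δ z n g else 0) then
    ((-((((n : ℝ) + 1))⁻¹ * Real.log (∑ g : Fin (n + 1) → VSet G,
      if empMeas n g ∈ CC G S0 then
        Real.exp (-((n : ℝ) + 1) * h (empMeas n g)) * liftTraj G δ z n g
      else 0)) : ℝ) : EReal)
  else (⊤ : EReal)

end Lifted

section Mine
variable {V : Type} [Fintype V] [DecidableEq V]

lemma coe_sum_my {ι : Type} (s : Finset ι) (f : ι → ℝ) :
    ((∑ i ∈ s, f i : ℝ) : EReal) = ∑ i ∈ s, (f i : EReal) := by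
  induction s using Finset.induction_on with
  | empty => simp
  | insert a s ha ih => rw [Finset.sum_insert ha, Finset.sum_insert ha, EReal.coe_add, ih]

/-- real version of the integrated relative entropy -/
def RI (ν : V → ℝ) (q p : V → V → ℝ) : ℝ := ∑ x, ν x * ∑ y, q x y * Real.log (q x y / p x y)

lemma relEntInt_eq (ν : V → ℝ) (q p : V → V → ℝ) (h : ∀ x y, p x y = 0 → q x y = 0) :
    relEntInt ν q p = ((RI ν q p : ℝ) : EReal) := by
  unfold relEntInt RI
  rw [coe_sum_my]
  refine Finset.sum_congr rfl fun x _ => ?_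
  rw [relEnt, if_pos (h x), EReal.coe_mul]

lemma cost_eq {b : ℕ} (r : Fin b → ℝ) (ν : Fin b → V → ℝ) (q p : Fin b → V → V → ℝ)
    (h : ∀ k x y, p k x y = 0 → q k x y = 0) :
    ∑ k, ((r k : ℝ) : EReal) * relEntInt (ν k) (q k) (p k) =
      ((∑ k, r k * RI (ν k) (q k) (p k) : ℝ) : EReal) := by
  rw [coe_sum_my]
  refine Finset.sum_congr rfl fun k _ => ?_
  rw [relEntInt_eq _ _ _ (h k), EReal.coe_mul]

lemma gw_pos {δ : ℝ} (hδ : 0 < δ) (F : Finset (Sym2 V)) (e : Sym2 V) : 0 < gw δ F e := by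
  unfold gw; split_ifs <;> linarith

variable (G : SimpleGraph V) [DecidableRel G.Adj]

lemma den_pos {δ : ℝ} (hδ : 0 < δ) (F : Finset (Sym2 V)) {x y : V} (h : G.Adj x y) :
    0 < ∑ z ∈ G.neighborFinset x, gw δ F s(x, z) :=
  Finset.sum_pos (fun z _ => gw_pos hδ F _) ⟨y, by simpa using h⟩

lemma phat_pos {δ : ℝ} (hδ : 0 < δ) (F : Finset (Sym2 V)) {x y : V} (h : G.Adj x y) :
    0 < phat G δ F x y := by
  rw [phat, if_pos h]
  exact div_pos (gw_pos hδ F _) (den_pos G hδ F h)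

lemma phat_nonneg {δ : ℝ} (hδ : 0 < δ) (F : Finset (Sym2 V)) (x y : V) :
    0 ≤ phat G δ F x y := by
  by_cases h : G.Adj x y
  · exact (phat_pos G hδ F h).le
  · simp [phat, h]

lemma phat_one (F F' : Finset (Sym2 V)) : phat G 1 F = phat G 1 F' := by
  funext x y; simp [phat, gw]

lemma phat_full {δ : ℝ} (hδ : 0 < δ) (F' : Finset (Sym2 V)) :
    phat G δ G.edgeFinset = phat G 1 F' := by
  funext x y
  unfold phat
  by_cases h : G.Adj x y
  · rw [if_pos h, if_pos h]
    have h1 : ∑ z ∈ G.neighborFinset x, gw δ G.edgeFinset s(x, z)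
        = ∑ z ∈ G.neighborFinset x, δ := by
      refine Finset.sum_congr rfl fun z hz => ?_
      have : G.Adj x z := by simpa using hz
      simp [gw, this]
    have hc : (0:ℝ) < (G.neighborFinset x).card := by
      exact_mod_cast Finset.card_pos.2 ⟨y, by simpa using h⟩
    rw [h1]
    have : gw δ G.edgeFinset s(x, y) = δ := by simp [gw, h]
    rw [this]
    simp only [gw, ite_self, Finset.sum_const, nsmul_eq_mul, mul_one]
    field_simp
  · simp [h]

lemma phat_le {δ : ℝ} (hδ : 0 < δ) (hδ1 : δ < 1) (F : Finset (Sym2 V)) {x y : V}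
    (h : G.Adj x y) (hF : s(x, y) ∈ F) : phat G δ F x y ≤ phat G 1 F x y := by
  rw [phat, phat, if_pos h, if_pos h, div_le_div_iff₀ (den_pos G hδ F h) (den_pos G one_pos F h)]
  have h1 : gw δ F s(x, y) = δ := by simp [gw, hF]
  have h2 : ∀ e, gw 1 F e = 1 := by intro e; simp [gw]
  simp only [h1, h2, one_mul]
  rw [Finset.mul_sum]
  refine Finset.sum_le_sum fun z _ => ?_
  unfold gw; split_ifs <;> linarith

lemma stoch_phat {δ : ℝ} (hδ : 0 < δ) (F : Finset (Sym2 V)) {x y : V} (h : G.Adj x y) :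
    ∑ z, phat G δ F x z = 1 := by
  have hd := den_pos G hδ F h
  have : ∑ z, phat G δ F x z = ∑ z ∈ G.neighborFinset x,
      gw δ F s(x, z) / ∑ z ∈ G.neighborFinset x, gw δ F s(x, z) := by
    rw [← Finset.sum_subset (Finset.subset_univ (G.neighborFinset x))]
    · refine Finset.sum_congr rfl fun z hz => ?_
      rw [phat, if_pos (by simpa using hz)]
    · intro z _ hz
      rw [phat, if_neg (by simpa using hz)]
  rw [this, ← Finset.sum_div, div_self hd.ne']

lemma jensen {b : ℕ} (w t : Fin b → ℝ) (p : ℝ) (hw : ∀ k, 0 ≤ w k) (hw1 : ∑ k, w k = 1)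
    (ht : ∀ k, 0 ≤ t k) (hp : p = 0 → ∀ k, t k = 0) :
    (∑ k, w k * t k) * Real.log ((∑ k, w k * t k) / p) ≤
      ∑ k, w k * (t k * Real.log (t k / p)) := by
  by_cases h0 : p = 0
  · simp [hp h0]
  have e : ∀ s : ℝ, s * Real.log (s / p) = s * Real.log s - s * Real.log p := by
    intro s
    by_cases hs : s = 0
    · simp [hs]
    · rw [Real.log_div hs h0]; ring
  simp only [e]
  have := Real.convexOn_mul_log.map_sum_le (t := Finset.univ) (w := w) (p := t)
    (fun k _ => hw k) hw1 (fun k _ => ht k)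
  simp only [smul_eq_mul] at this
  simp only [mul_sub, Finset.sum_sub_distrib]
  have e2 : ∑ k, w k * (t k * Real.log p) = (∑ k, w k * t k) * Real.log p := by
    rw [Finset.sum_mul]; exact Finset.sum_congr rfl fun k _ => by ring
  rw [e2]; linarith

lemma RI_le {δ : ℝ} (hδ : 0 < δ) (hδ1 : δ < 1) (F : Finset (Sym2 V)) (hF : F ⊆ G.edgeFinset)
    (ν : V → ℝ) (hν : ∀ x, 0 ≤ ν x) (q : V → V → ℝ) (hq : q ∈ TE F) :
    RI ν q (phat G 1 F) ≤ RI ν q (phat G δ F) := by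
  refine Finset.sum_le_sum fun x _ => mul_le_mul_of_nonneg_left ?_ (hν x)
  refine Finset.sum_le_sum fun y _ => ?_
  by_cases h : q x y = 0
  · simp [h]
  have hm := hq.2.2 x y h
  have ha : G.Adj x y := by simpa using hF hm
  have hqp : 0 < q x y := lt_of_le_of_ne (hq.1 x y) (Ne.symm h)
  have p1 := phat_pos G hδ F ha
  have p2 := phat_pos G one_pos F ha
  refine mul_le_mul_of_nonneg_left (Real.log_le_log (div_pos hqp p2) ?_) hqp.le
  exact div_le_div_of_nonneg_left hqp.le p1 (phat_le G hδ hδ1 F ha hm)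

lemma abs_cont {δ : ℝ} (hδ : 0 < δ) (F F' : Finset (Sym2 V)) (hF : F ⊆ G.edgeFinset)
    (q : V → V → ℝ) (hq : q ∈ TE F) (x y : V) (h : phat G δ F' x y = 0) : q x y = 0 := by
  by_contra hne
  have ha : G.Adj x y := by simpa using hF (hq.2.2 x y hne)
  exact (phat_pos G hδ F' ha).ne' h

lemma merge {b : ℕ} (ν : V → ℝ) (νs : Fin b → V → ℝ) (hνs : ∀ k x, 0 ≤ νs k x)
    (r : Fin b → ℝ) (hr : ∀ k, 0 ≤ r k) (Es : Fin b → Finset (Sym2 V))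
    (hEs : ∀ k, Es k ⊆ G.edgeFinset) (qs : Fin b → V → V → ℝ)
    (hsupp : ∀ k x, νs k x ≠ 0 → memVerts (Es k) x)
    (hsum : ∀ x, ∑ k, r k * νs k x = ν x)
    (hq : ∀ k, qs k ∈ TE (Es k)) (hinv : ∀ k, Invariant (νs k) (qs k))
    (hdeg : ∀ x, ∃ y, G.Adj x y) :
    ∃ q ∈ TE G.edgeFinset, Invariant ν q ∧
      RI ν q (phat G 1 ∅) ≤ ∑ k, r k * RI (νs k) (qs k) (phat G 1 ∅) := by
  set p := phat G 1 ∅ with hpdef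
  have hν : ∀ x, 0 ≤ ν x := fun x => by
    rw [← hsum]; exact Finset.sum_nonneg fun k _ => mul_nonneg (hr k) (hνs k x)
  have hz : ∀ x, ν x = 0 → ∀ k, r k * νs k x = 0 := by
    intro x hx k
    have := hsum x
    rw [hx, Finset.sum_eq_zero_iff_of_nonneg
      (fun k _ => mul_nonneg (hr k) (hνs k x))] at this
    exact this k (Finset.mem_univ k)
  have hac : ∀ k x y, p x y = 0 → qs k x y = 0 := fun k x y h =>
    abs_cont G one_pos (Es k) ∅ (hEs k) (qs k) (hq k) x y h
  let w : V → Fin b → ℝ := fun x k => r k * νs k x / ν x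
  have hw0 : ∀ x k, 0 ≤ w x k := fun x k =>
    div_nonneg (mul_nonneg (hr k) (hνs k x)) (hν x)
  have hw1 : ∀ x, ν x ≠ 0 → ∑ k, w x k = 1 := by
    intro x hx
    simp only [w]
    rw [← Finset.sum_div, hsum, div_self hx]
  have hνw : ∀ x k, ν x * w x k = r k * νs k x := by
    intro x k
    by_cases hx : ν x = 0
    · rw [hx, hz x hx k, zero_mul]
    · simp only [w]; field_simp
  let q : V → V → ℝ := fun x y => if ν x = 0 then p x y else ∑ k, w x k * qs k x y
  have hνq : ∀ x y, ν x * q x y = ∑ k, r k * νs k x * qs k x y := by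
    intro x y
    by_cases hx : ν x = 0
    · rw [hx, zero_mul]; symm
      exact Finset.sum_eq_zero fun k _ => by rw [hz x hx k, zero_mul]
    · simp only [q, if_neg hx, Finset.mul_sum]
      exact Finset.sum_congr rfl fun k _ => by rw [← mul_assoc, hνw]
  refine ⟨q, ⟨?_, ?_, ?_⟩, ?_, ?_⟩
  · intro x y
    simp only [q]
    split_ifs
    · exact phat_nonneg G one_pos _ x y
    · exact Finset.sum_nonneg fun k _ => mul_nonneg (hw0 x k) ((hq k).1 x y)
  · intro x _
    by_cases hx : ν x = 0
    · obtain ⟨y, hy⟩ := hdeg x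
      simp only [q, if_pos hx]
      exact stoch_phat G one_pos _ hy
    · simp only [q, if_neg hx]
      rw [Finset.sum_comm, ← hw1 x hx]
      refine Finset.sum_congr rfl fun k _ => ?_
      rw [← Finset.mul_sum]
      by_cases hk : νs k x = 0
      · simp [w, hk]
      · rw [(hq k).2.1 x (hsupp k x hk), mul_one]
  · intro x y hne
    have : G.Adj x y := by
      by_contra hn
      apply hne
      have hp0 : p x y = 0 := by simp [hpdef, phat, hn]
      simp only [q]
      split_ifs
      · exact hp0
      · exact Finset.sum_eq_zero fun k _ => by rw [hac k x y hp0, mul_zero]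
    simpa using this
  · intro y
    simp only [hνq]
    rw [Finset.sum_comm, ← hsum y]
    refine Finset.sum_congr rfl fun k _ => ?_
    rw [← hinv k y, Finset.mul_sum]
    exact Finset.sum_congr rfl fun x _ => by ring
  · have e : ∑ k, r k * RI (νs k) (qs k) p = ∑ x, ν x * ∑ y, ∑ k, w x k *
        (qs k x y * Real.log (qs k x y / p x y)) := by
      simp only [RI, Finset.mul_sum]
      rw [Finset.sum_comm]
      refine Finset.sum_congr rfl fun x _ => ?_
      rw [Finset.sum_comm]
      refine Finset.sum_congr rfl fun y _ => Finset.sum_congr rfl fun k _ => ?_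
      rw [← mul_assoc, ← hνw, mul_assoc]
    rw [e]
    refine Finset.sum_le_sum fun x _ => ?_
    by_cases hx : ν x = 0
    · simp [hx]
    refine mul_le_mul_of_nonneg_left (Finset.sum_le_sum fun y _ => ?_) (hν x)
    simp only [q, if_neg hx]
    exact jensen (w x) (fun k => qs k x y) (p x y) (hw0 x) (hw1 x hx)
      (fun k => (hq k).1 x y) (fun h k => hac k x y h)

end Mine

/-- `I_δ ≡ I₁` for every `δ ∈ (0,1)`. -/
theorem orrw_rate_eq_of_lt_one {V : Type} [Fintype V] [DecidableEq V]
    (G : SimpleGraph V) [DecidableRel G.Adj] (hG : G.Connected)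
    (hV : 3 ≤ Fintype.card V) (v₁ : V) (δ : ℝ) (hδ : 0 < δ) (hδ1 : δ < 1) :
    ∀ ν : ProbMeas V, Ifun G v₁ δ ν = Ifun G v₁ 1 ν := by
  intro ν
  have hdeg : ∀ x, ∃ y, G.Adj x y := by
    haveI : Nontrivial V := Fintype.one_lt_card_iff_nontrivial.1 (by omega)
    intro x
    exact hG.preconnected.exists_adj_of_nontrivial x
  apply le_antisymm
  · refine le_sInf ?_
    rintro c ⟨νs, r, Es, qs, hE, hr, hr1, hsupp, hsum, hq, hinv, rfl⟩
    have hsub := hE.1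
    obtain ⟨q, hqT, hqI, hqle⟩ := merge G ν.1 (fun k => (νs k).1) (fun k => (νs k).2.1) r hr Es
      hsub qs hsupp hsum hq hinv hdeg
    have hb : 0 < G.edgeFinset.card := by
      rcases Nat.eq_zero_or_pos G.edgeFinset.card with h | h
      · exfalso
        haveI : IsEmpty (Fin G.edgeFinset.card) := by rw [h]; infer_instance
        simp at hr1
      · exact h
    let L : Fin G.edgeFinset.card := ⟨G.edgeFinset.card - 1, by omega⟩
    have hL : Es L = G.edgeFinset := by
      refine Finset.eq_of_subset_of_card_le (hsub L) ?_
      rw [hE.2.1 L]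
      simp only [L]; omega
    have hqs' : ∀ k, (if k = L then q else qs k) ∈ TE (Es k) := by
      intro k
      split_ifs with h
      · rw [h, hL]; exact hqT
      · exact hq k
    refine sInf_le_of_le ⟨fun k => if k = L then ν else νs k, fun k => if k = L then 1 else 0, Es,
      fun k => if k = L then q else qs k, hE, ?_, ?_, ?_, ?_, hqs', ?_, rfl⟩ ?_
    · intro k; dsimp only; split_ifs <;> norm_num
    · simp
    · intro k x
      dsimp only
      split_ifs with h
      · intro _
        rw [h, hL]
        obtain ⟨y, hy⟩ := hdeg x
        exact ⟨s(x, y), by simpa using hy, by simp⟩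
      · exact hsupp k x
    · intro x; simp
    · intro k
      dsimp only
      split_ifs with h
      · exact hqI
      · exact hinv k
    · have A := cost_eq (fun k => if k = L then (1:ℝ) else 0)
        (fun k => (if k = L then ν else νs k : ProbMeas V).1)
        (fun k => if k = L then q else qs k) (fun k => phat G δ (Es k))
        (fun k x y h => abs_cont G hδ (Es k) (Es k) (hsub k) _ (hqs' k) x y h)
      have B := cost_eq r (fun k => (νs k).1) qs (fun k => phat G 1 (Es k))
        (fun k x y h => abs_cont G one_pos (Es k) (Es k) (hsub k) _ (hq k) x y h)
      refine A.le.trans (le_trans ?_ B.ge)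
      rw [EReal.coe_le_coe_iff]
      simp only [ite_mul, one_mul, zero_mul, Finset.sum_ite_eq', Finset.mem_univ, if_true]
      rw [hL, phat_full G hδ ∅]
      simpa only [phat_one G _ ∅] using hqle
  · refine le_sInf ?_
    rintro c ⟨νs, r, Es, qs, hE, hr, hr1, hsupp, hsum, hq, hinv, rfl⟩
    refine sInf_le_of_le ⟨νs, r, Es, qs, hE, hr, hr1, hsupp, hsum, hq, hinv, rfl⟩ ?_
    have A := cost_eq r (fun k => (νs k).1) qs (fun k => phat G δ (Es k))
      (fun k x y h => abs_cont G hδ (Es k) (Es k) (hE.1 k) _ (hq k) x y h)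
    have B := cost_eq r (fun k => (νs k).1) qs (fun k => phat G 1 (Es k))
      (fun k x y h => abs_cont G one_pos (Es k) (Es k) (hE.1 k) _ (hq k) x y h)
    refine B.le.trans (le_trans ?_ A.ge)
    rw [EReal.coe_le_coe_iff]
    exact Finset.sum_le_sum fun k _ => mul_le_mul_of_nonneg_left
      (RI_le G hδ hδ1 (Es k) (hE.1 k) _ (νs k).2.1 _ (hq k)) (hr k)

end ORRW
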